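/- arXiv:1608.08184 — 4 statements merged into one kernel-verified Lean document; each statement's English description precedes it below -/
import Mathlib

section
/- Let A and M be symmetric positive definite real n×n matrices and let μ ≥ 0 be a nonnegative real number. Then for every nonzero vector v ∈ ℝⁿ, 1/2 ≤ (vᵀ(M A⁻¹ M + μ A)v) / (vᵀ(M + √μ A) A⁻¹ (M + √μ A)v) ≤ 1. -/
open Matrix

/-- **Lemma (Pearson–Wathen).** Let `A` and `M` be symmetric positive definite real `n × n`
matrices and let `μ ≥ 0`. Then for every nonzero `v ∈ ℝⁿ`,
`1/2 ≤ (vᵀ (M A⁻¹ M + μ A) v) / (vᵀ (M + √μ A) A⁻¹ (M + √μ A) v) ≤ 1`. -/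
theorem pearson_wathen {n : ℕ} (A M : Matrix (Fin n) (Fin n) ℝ)
    (hA : A.PosDef) (hM : M.PosDef) (μ : ℝ) (hμ : 0 ≤ μ)
    (v : Fin n → ℝ) (hv : v ≠ 0) :
    (1 / 2 : ℝ) ≤ (v ⬝ᵥ ((M * A⁻¹ * M + μ • A) *ᵥ v)) /
        (v ⬝ᵥ (((M + Real.sqrt μ • A) * A⁻¹ * (M + Real.sqrt μ • A)) *ᵥ v)) ∧
      (v ⬝ᵥ ((M * A⁻¹ * M + μ • A) *ᵥ v)) /
        (v ⬝ᵥ (((M + Real.sqrt μ • A) * A⁻¹ * (M + Real.sqrt μ • A)) *ᵥ v)) ≤ 1 := by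
  have hdet : IsUnit A.det := (Matrix.isUnit_iff_isUnit_det A).mp hA.isUnit
  have key : ∀ s : ℝ, (M + s • A) * A⁻¹ * (M + s • A)
      = M * A⁻¹ * M + (2 * s) • M + (s * s) • A := by
    intro s
    have h1 : A * A⁻¹ = 1 := Matrix.mul_nonsing_inv A hdet
    have h2 : M * A⁻¹ * A = M := by
      rw [Matrix.mul_assoc, Matrix.nonsing_inv_mul A hdet, Matrix.mul_one]
    simp only [add_mul, mul_add, smul_mul_assoc, mul_smul_comm, h1, h2, one_mul, smul_smul]
    module
  have hMt : Mᵀ = M := by simpa using hM.1.eq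
  have hAt : Aᵀ = A := by simpa using hA.1.eq
  have hquad : ∀ B : Matrix (Fin n) (Fin n) ℝ, Bᵀ = B →
      v ⬝ᵥ ((B * A⁻¹ * B) *ᵥ v) = (B *ᵥ v) ⬝ᵥ (A⁻¹ *ᵥ (B *ᵥ v)) := by
    intro B hB
    rw [← Matrix.mulVec_mulVec, ← Matrix.mulVec_mulVec, Matrix.dotProduct_mulVec,
      ← Matrix.mulVec_transpose, hB]
  have hb : 0 < v ⬝ᵥ (M *ᵥ v) := by simpa using hM.dotProduct_mulVec_pos hv
  have hc : 0 < v ⬝ᵥ (A *ᵥ v) := by simpa using hA.dotProduct_mulVec_pos hv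
  have hMv : M *ᵥ v ≠ 0 := by
    intro h
    simp [h] at hb
  have ha : 0 < v ⬝ᵥ ((M * A⁻¹ * M) *ᵥ v) := by
    rw [hquad M hMt]
    simpa using hA.inv.dotProduct_mulVec_pos hMv
  have hm : 0 ≤ v ⬝ᵥ (((M + (-√μ) • A) * A⁻¹ * (M + (-√μ) • A)) *ᵥ v) := by
    rw [hquad _ (by simp [hMt, hAt])]
    simpa using hA.inv.posSemidef.dotProduct_mulVec_nonneg ((M + (-√μ) • A) *ᵥ v)
  have hs : 0 ≤ √μ := Real.sqrt_nonneg μ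
  have hss : √μ * √μ = μ := Real.mul_self_sqrt hμ
  rw [key, neg_mul_neg, hss] at hm
  rw [key, hss]
  simp only [Matrix.add_mulVec, Matrix.smul_mulVec, dotProduct_add, dotProduct_smul,
    smul_eq_mul] at hm ⊢
  have hsb := mul_nonneg hs hb.le
  have hmc := mul_nonneg hμ hc.le
  have hD : 0 < v ⬝ᵥ ((M * A⁻¹ * M) *ᵥ v) + 2 * √μ * (v ⬝ᵥ (M *ᵥ v)) + μ * (v ⬝ᵥ (A *ᵥ v)) := by
    nlinarith
  constructor
  · rw [le_div_iff₀ hD]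
    nlinarith
  · rw [div_le_one hD]
    nlinarith
end

section
/- For every v ∈ V_p, the bilinear form B satisfies the coercivity identity B(v,v) = (1/2)‖v(1)‖²_M + (1/2)‖v(−1)‖²_M + (τ/2)∫_{−1}^{1} ‖v(s)‖²_A ds. -/
open Matrix Polynomial

/-- The `k`-th Legendre polynomial (Rodrigues' formula), normalized so that `L_k(1) = 1`. -/
noncomputable def legendre (k : ℕ) : Polynomial ℝ :=
  ((2 ^ k * (Nat.factorial k) : ℝ))⁻¹ •
    ((fun q => Polynomial.derivative q)^[k] ((Polynomial.X ^ 2 - 1) ^ k))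

/-- Evaluation at `s` of the `ℝⁿ`-valued polynomial with coefficients `c` (degree ≤ p). -/
noncomputable def pev {n p : ℕ} (c : Fin (p + 1) → Fin n → ℝ) (s : ℝ) : Fin n → ℝ :=
  ∑ j : Fin (p + 1), s ^ (j : ℕ) • c j

/-- Evaluation at `s` of the derivative of the `ℝⁿ`-valued polynomial with coefficients `c`. -/
noncomputable def pdev {n p : ℕ} (c : Fin (p + 1) → Fin n → ℝ) (s : ℝ) : Fin n → ℝ :=
  ∑ j : Fin (p + 1), ((((j : ℕ) : ℝ)) * s ^ ((j : ℕ) - 1)) • c j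

/-- Evaluation at `s` of `(I v)'`, the derivative of the reconstruction `I v` of the
`ℝⁿ`-valued polynomial `v` with coefficients `c`, where the reconstruction operator
`I v := v − v(−1)·(−1)^p (L_p − L_{p+1})/2` acts coefficientwise. -/
noncomputable def reconD {n p : ℕ} (c : Fin (p + 1) → Fin n → ℝ) (s : ℝ) : Fin n → ℝ :=
  pdev c s -
    ((-1 : ℝ) ^ p * (Polynomial.derivative (legendre p - legendre (p + 1))).eval s / 2) •
      pev c (-1)

/-- The DG bilinear form `B(u, ·)` applied to a test function `g : ℝ → ℝⁿ`:
`B(u,g) = ∫_{−1}^{1} (u'(s), g(s))_M ds + (u(−1), g(−1))_M + (τ/2) ∫_{−1}^{1} (u(s), g(s))_A ds`,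
where `(u,v)_M := vᵀ M u`. -/
noncomputable def Bform {n p : ℕ} (M A : Matrix (Fin n) (Fin n) ℝ) (τ : ℝ)
    (c : Fin (p + 1) → Fin n → ℝ) (g : ℝ → Fin n → ℝ) : ℝ :=
  (∫ s in (-1 : ℝ)..1, g s ⬝ᵥ (M *ᵥ pdev c s)) + g (-1) ⬝ᵥ (M *ᵥ pev c (-1)) +
    (τ / 2) * ∫ s in (-1 : ℝ)..1, g s ⬝ᵥ (A *ᵥ pev c s)

/-- The operator `P v := A⁻¹ M (I v)' + (τ/2) v`, evaluated at `s`. -/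
noncomputable def Pop {n p : ℕ} (M A : Matrix (Fin n) (Fin n) ℝ) (τ : ℝ)
    (c : Fin (p + 1) → Fin n → ℝ) (s : ℝ) : Fin n → ℝ :=
  (A⁻¹ * M) *ᵥ reconD c s + (τ / 2) • pev c s

theorem pev_hasDerivAt {n p : ℕ} (c : Fin (p + 1) → Fin n → ℝ) (s : ℝ) :
    HasDerivAt (fun t => pev c t) (pdev c s) s := by
  unfold pev pdev
  apply HasDerivAt.fun_sum
  intro j _
  exact (hasDerivAt_pow (j : ℕ) s).smul_const (c j)

theorem pdev_continuous {n p : ℕ} (c : Fin (p + 1) → Fin n → ℝ) :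
    Continuous (fun s => pdev c s) := by
  unfold pdev
  fun_prop

theorem pev_continuous {n p : ℕ} (c : Fin (p + 1) → Fin n → ℝ) :
    Continuous (fun s => pev c s) := by
  unfold pev
  fun_prop

theorem energy_integral {n p : ℕ} (M : Matrix (Fin n) (Fin n) ℝ) (hM : M.PosDef)
    (c : Fin (p + 1) → Fin n → ℝ) :
    2 * (∫ s in (-1 : ℝ)..1, pev c s ⬝ᵥ (M *ᵥ pdev c s))
      = pev c 1 ⬝ᵥ (M *ᵥ pev c 1) - pev c (-1) ⬝ᵥ (M *ᵥ pev c (-1)) := by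
  have hT : Mᵀ = M := by
    have h := hM.isHermitian
    rwa [Matrix.IsHermitian, Matrix.conjTranspose_eq_transpose_of_trivial] at h
  have hsymm : ∀ x y : Fin n → ℝ, x ⬝ᵥ (M *ᵥ y) = y ⬝ᵥ (M *ᵥ x) := by
    intro x y
    rw [Matrix.dotProduct_mulVec, ← Matrix.mulVec_transpose, hT, dotProduct_comm]
  have hcoord : ∀ (s : ℝ) (i : Fin n), HasDerivAt (fun t => pev c t i) (pdev c s i) s :=
    fun s i => (hasDerivAt_pi.1 (pev_hasDerivAt c s)) i
  have hder : ∀ s : ℝ, HasDerivAt (fun t => pev c t ⬝ᵥ (M *ᵥ pev c t))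
      (2 * (pev c s ⬝ᵥ (M *ᵥ pdev c s))) s := by
    intro s
    have h1 : HasDerivAt (fun t => pev c t ⬝ᵥ (M *ᵥ pev c t))
        (pdev c s ⬝ᵥ (M *ᵥ pev c s) + pev c s ⬝ᵥ (M *ᵥ pdev c s)) s := by
      simp only [dotProduct, Matrix.mulVec, ← Finset.sum_add_distrib]
      apply HasDerivAt.fun_sum
      intro i _
      apply (hcoord s i).fun_mul
      apply HasDerivAt.fun_sum
      intro j _
      exact (hcoord s j).const_mul (M i j)
    rw [hsymm (pdev c s)] at h1
    rwa [two_mul]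
  have hc1 := pev_continuous c
  have hc2 := pdev_continuous c
  rw [← intervalIntegral.integral_const_mul]
  apply intervalIntegral.integral_eq_sub_of_hasDerivAt (fun s _ => hder s)
  apply Continuous.intervalIntegrable
  exact continuous_const.mul (hc1.dotProduct (continuous_const.matrix_mulVec hc2))

/-- **Coercivity identity.** For every `v ∈ V_p`,
`B(v,v) = (1/2)‖v(1)‖²_M + (1/2)‖v(−1)‖²_M + (τ/2) ∫_{−1}^{1} ‖v(s)‖²_A ds`. -/
theorem coercivity_identity {n p : ℕ} (M A : Matrix (Fin n) (Fin n) ℝ)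
    (hM : M.PosDef) (hA : A.PosDef) (τ : ℝ) (hτ : 0 < τ)
    (c : Fin (p + 1) → Fin n → ℝ) :
    Bform M A τ c (fun s => pev c s)
      = (1 / 2) * (pev c 1 ⬝ᵥ (M *ᵥ pev c 1)) + (1 / 2) * (pev c (-1) ⬝ᵥ (M *ᵥ pev c (-1))) +
        (τ / 2) * ∫ s in (-1 : ℝ)..1, pev c s ⬝ᵥ (A *ᵥ pev c s) := by
  have h := energy_integral M hM c
  unfold Bform
  linarith
end

section
/- For every polynomial v of degree at most p, the reconstruction I v satisfies: (i) (I v)(1) = v(1); (ii) (I v)(−1) = 0; (iii) ∫_{−1}^{1} (I v)(s) w(s) ds = ∫_{−1}^{1} v(s) w(s) ds for every polynomial w of degree at most p−1. -/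
open Polynomial

/-- The reconstruction operator `I : P_p → P_{p+1}`,
`I v := v − v(−1)·(−1)^p (L_p − L_{p+1})/2`. -/
noncomputable def recon (p : ℕ) (v : Polynomial ℝ) : Polynomial ℝ :=
  v - (v.eval (-1) * (-1 : ℝ) ^ p / 2) • (legendre p - legendre (p + 1))

theorem eval_iterate_aux (a : ℝ) (k : ℕ) (f : ℝ[X]) :
    (derivative^[k] f).eval a = (k.factorial : ℝ) * (taylor a f).coeff k := by
  rw [taylor_coeff, ← factorial_smul_hasseDeriv]
  simp

theorem taylor_aux (a : ℝ) (k : ℕ) (q : ℝ[X]) :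
    taylor a ((X - C a) ^ k * q) = X ^ k * taylor a q := by
  simp [taylor_mul, taylor_pow]

theorem eval_top_aux (a : ℝ) (k : ℕ) (q : ℝ[X]) :
    (derivative^[k] ((X - C a) ^ k * q)).eval a = (k.factorial : ℝ) * q.eval a := by
  rw [eval_iterate_aux, taylor_aux, coeff_X_pow_mul']
  simp [taylor_coeff_zero]

theorem eval_low_aux (a : ℝ) (j k : ℕ) (hj : j < k) (q : ℝ[X]) :
    (derivative^[j] ((X - C a) ^ k * q)).eval a = 0 := by
  rw [eval_iterate_aux, taylor_aux, coeff_X_pow_mul']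
  simp [hj]

theorem fact_one (k : ℕ) : ((X ^ 2 - 1) ^ k : ℝ[X]) = (X - C 1) ^ k * (X + 1) ^ k := by
  rw [← mul_pow]; congr 1; simp; ring

theorem fact_neg (k : ℕ) : ((X ^ 2 - 1) ^ k : ℝ[X]) = (X - C (-1)) ^ k * (X - 1) ^ k := by
  rw [← mul_pow]; congr 1; simp; ring

theorem legendre_eval_one (k : ℕ) : (legendre k).eval 1 = 1 := by
  have h := eval_top_aux 1 k ((X + 1) ^ k)
  rw [← fact_one] at h
  have hk : (k.factorial : ℝ) ≠ 0 := by positivity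
  unfold legendre
  rw [eval_smul, h]
  simp only [eval_pow, eval_add, eval_X, eval_one, smul_eq_mul]
  norm_num
  field_simp

theorem legendre_eval_neg (k : ℕ) : (legendre k).eval (-1) = (-1) ^ k := by
  have h := eval_top_aux (-1) k ((X - 1) ^ k)
  rw [← fact_neg] at h
  have hk : (k.factorial : ℝ) ≠ 0 := by positivity
  unfold legendre
  rw [eval_smul, h]
  simp only [eval_pow, eval_sub, eval_X, eval_one, smul_eq_mul]
  rw [show (-1 - 1 : ℝ) = (-1) * 2 by norm_num, mul_pow]
  field_simp

theorem orth_aux (k j : ℕ) (hj : j ≤ k) : ∀ w : Polynomial ℝ, w.degree < (j : WithBot ℕ) →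
    (∫ s in (-1 : ℝ)..1, (derivative^[j] ((X ^ 2 - 1) ^ k : ℝ[X])).eval s * w.eval s) = 0 := by
  induction j with
  | zero =>
    intro w hw
    have : w = 0 := by
      by_contra h
      rw [degree_eq_natDegree h] at hw
      exact absurd (Nat.cast_lt.1 hw) (Nat.not_lt_zero _)
    simp [this]
  | succ j ih =>
    intro w hw
    have hd : (derivative w).degree < (j : WithBot ℕ) := by
      rw [degree_lt_iff_coeff_zero] at hw ⊢
      intro m hm
      rw [coeff_derivative, hw (m + 1) (by omega), zero_mul]
    have h0 := ih (by omega) _ hd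
    have e1 := eval_low_aux 1 j k (by omega) ((X + 1) ^ k)
    have e2 := eval_low_aux (-1) j k (by omega) ((X - 1) ^ k)
    rw [← fact_one] at e1
    rw [← fact_neg] at e2
    rw [Function.iterate_succ_apply']
    have key := intervalIntegral.integral_deriv_mul_eq_sub (a := (-1 : ℝ)) (b := 1)
      (u := fun s => (derivative^[j] ((X ^ 2 - 1) ^ k : ℝ[X])).eval s) (v := fun s => w.eval s)
      (fun x _ => Polynomial.hasDerivAt _ x) (fun x _ => Polynomial.hasDerivAt _ x)
      ((Polynomial.continuous _).intervalIntegrable _ _)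
      ((Polynomial.continuous _).intervalIntegrable _ _)
    have hi : ∀ q r : ℝ[X], IntervalIntegrable (fun s => q.eval s * r.eval s)
        MeasureTheory.volume (-1 : ℝ) 1 := fun q r =>
      (q.continuous.mul r.continuous).intervalIntegrable _ _
    rw [intervalIntegral.integral_add (hi _ _) (hi _ _),
      h0, e1, e2] at key
    simpa using key

theorem legendre_orth (k : ℕ) (w : Polynomial ℝ) (hw : w.degree < (k : WithBot ℕ)) :
    (∫ s in (-1 : ℝ)..1, (legendre k).eval s * w.eval s) = 0 := by
  have h := orth_aux k k le_rfl w hw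
  unfold legendre
  simp only [eval_smul, smul_eq_mul, mul_assoc]
  rw [intervalIntegral.integral_const_mul]
  exact mul_eq_zero_of_right _ h

/-- **Properties of the reconstruction operator.** For every polynomial `v` of degree at most
`p`: (i) `(I v)(1) = v(1)`; (ii) `(I v)(−1) = 0`; (iii) `∫_{−1}^{1} (I v) w ds = ∫_{−1}^{1} v w ds`
for every polynomial `w` of degree at most `p − 1`. -/
theorem recon_properties (p : ℕ) (v : Polynomial ℝ) (hv : v.natDegree ≤ p) :
    (recon p v).eval 1 = v.eval 1 ∧ (recon p v).eval (-1) = 0 ∧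
      ∀ w : Polynomial ℝ, w.degree < (p : WithBot ℕ) →
        (∫ s in (-1 : ℝ)..1, (recon p v).eval s * w.eval s)
          = ∫ s in (-1 : ℝ)..1, v.eval s * w.eval s := by
  refine ⟨?_, ?_, ?_⟩
  · simp [recon, legendre_eval_one]
  · simp only [recon, eval_sub, eval_smul, legendre_eval_neg, smul_eq_mul, pow_succ]
    have h : ((-1 : ℝ) ^ p) * (-1) ^ p = 1 := by rw [← mul_pow]; simp
    linear_combination (-(v.eval (-1))) * h
  · intro w hw
    have h1 := legendre_orth p w hw
    have h2 := legendre_orth (p + 1) w (hw.trans (by exact_mod_cast Nat.lt_succ_self p))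
    have hi : ∀ q : ℝ[X], IntervalIntegrable (fun s => q.eval s * w.eval s)
        MeasureTheory.volume (-1 : ℝ) 1 := fun q =>
      (q.continuous.mul w.continuous).intervalIntegrable _ _
    have e : ∀ s : ℝ, (recon p v).eval s * w.eval s = v.eval s * w.eval s -
        (v.eval (-1) * (-1 : ℝ) ^ p / 2) * ((legendre p).eval s * w.eval s -
          (legendre (p + 1)).eval s * w.eval s) := by
      intro s
      simp only [recon, eval_sub, eval_smul, smul_eq_mul]
      ring
    simp only [e]
    rw [intervalIntegral.integral_sub (hi v) (((hi _).sub (hi _)).const_mul _),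
      intervalIntegral.integral_const_mul, intervalIntegral.integral_sub (hi _) (hi _), h1, h2]
    simp
end

section
/- For every polynomial v of degree at most p, (I v)' is identically zero on (−1,1) if and only if v is identically zero on (−1,1). Consequently, the symmetric bilinear form (u,v) ↦ ∫_{−1}^{1} (I u)'(s) (I v)'(s) ds is positive definite on P_p. -/
open Polynomial

theorem legendre_aux_monic (k : ℕ) : ((X ^ 2 - 1 : Polynomial ℝ) ^ k).Monic ∧
    ((X ^ 2 - 1 : Polynomial ℝ) ^ k).natDegree = k + k := by
  have h1 : (X ^ 2 - 1 : Polynomial ℝ).Monic := by monicity!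
  have h2 : (X ^ 2 - 1 : Polynomial ℝ).natDegree = 2 := by compute_degree!
  refine ⟨h1.pow k, ?_⟩
  rw [h1.natDegree_pow, h2]; ring

theorem legendre_natDegree_le_aux (k : ℕ) : (legendre k).natDegree ≤ k := by
  unfold legendre
  refine (natDegree_smul_le _ _).trans ?_
  refine (natDegree_iterate_derivative _ k).trans ?_
  rw [(legendre_aux_monic k).2]; omega

theorem legendre_coeff_ne_aux (k : ℕ) : (legendre k).coeff k ≠ 0 := by
  have hc : ((X ^ 2 - 1 : Polynomial ℝ) ^ k).coeff (k + k) = 1 := by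
    have h := (legendre_aux_monic k).1.coeff_natDegree
    rwa [(legendre_aux_monic k).2] at h
  have hd : (k + k).descFactorial k ≠ 0 := by
    rw [Ne, Nat.descFactorial_eq_zero_iff_lt]; omega
  have h : ((derivative)^[k] ((X ^ 2 - 1 : Polynomial ℝ) ^ k)).coeff k ≠ 0 := by
    rw [coeff_iterate_derivative, hc]
    simpa using hd
  unfold legendre
  rw [coeff_smul, smul_eq_mul]
  exact mul_ne_zero (by positivity) h

theorem recon_key_aux (p : ℕ) (v : Polynomial ℝ) (hv : v.natDegree ≤ p)
    (h : derivative (recon p v) = 0) : v = 0 := by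
  have hI := natDegree_eq_zero_of_derivative_eq_zero h
  have hc : (recon p v).coeff (p + 1) = 0 := coeff_eq_zero_of_natDegree_lt (by omega)
  have h1 : v.coeff (p + 1) = 0 := coeff_eq_zero_of_natDegree_lt (by omega)
  have h2 : (legendre p).coeff (p + 1) = 0 :=
    coeff_eq_zero_of_natDegree_lt (by have := legendre_natDegree_le_aux p; omega)
  have h3 := legendre_coeff_ne_aux (p + 1)
  have h4 : v.eval (-1) = 0 := by
    simpa [recon, h1, h2, h3] using hc
  have h5 : recon p v = v := by simp [recon, h4]
  rw [h5] at hI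
  rw [eq_C_of_natDegree_eq_zero hI] at h4 ⊢
  simpa using h4

theorem eq_zero_of_Ioo_aux (q : Polynomial ℝ) (h : ∀ s ∈ Set.Ioo (-1 : ℝ) 1, q.eval s = 0) :
    q = 0 :=
  eq_zero_of_infinite_isRoot q ((Set.Ioo_infinite (by norm_num)).mono h)

/-- For every polynomial `v` of degree at most `p`, `(I v)'` vanishes identically on `(−1,1)`
if and only if `v` vanishes identically on `(−1,1)`. Consequently, the symmetric bilinear form
`(u,v) ↦ ∫_{−1}^{1} (I u)'(s) (I v)'(s) ds` is positive definite on `P_p`. -/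
theorem recon_deriv_vanishing_iff (p : ℕ) :
    (∀ v : Polynomial ℝ, v.natDegree ≤ p →
      ((∀ s ∈ Set.Ioo (-1 : ℝ) 1, (Polynomial.derivative (recon p v)).eval s = 0) ↔
        ∀ s ∈ Set.Ioo (-1 : ℝ) 1, v.eval s = 0)) ∧
    (∀ u v : Polynomial ℝ,
      (∫ s in (-1 : ℝ)..1,
          (Polynomial.derivative (recon p u)).eval s * (Polynomial.derivative (recon p v)).eval s)
        = ∫ s in (-1 : ℝ)..1,
            (Polynomial.derivative (recon p v)).eval s *
              (Polynomial.derivative (recon p u)).eval s) ∧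
    (∀ v : Polynomial ℝ, v.natDegree ≤ p → v ≠ 0 →
      0 < ∫ s in (-1 : ℝ)..1,
        (Polynomial.derivative (recon p v)).eval s * (Polynomial.derivative (recon p v)).eval s) := by
  refine ⟨fun v hv => ⟨fun h => ?_, fun h => ?_⟩, fun u v => ?_, fun v hv hne => ?_⟩
  · intro s _
    rw [recon_key_aux p v hv (eq_zero_of_Ioo_aux _ h)]; simp
  · intro s _
    rw [eq_zero_of_Ioo_aux v h]; simp [recon]
  · simp only [mul_comm]
  · have hq : derivative (recon p v) ≠ 0 := fun h => hne (recon_key_aux p v hv h)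
    have hex : ∃ s ∈ Set.Ioo (-1 : ℝ) 1, (derivative (recon p v)).eval s ≠ 0 := by
      by_contra hcon
      push Not at hcon
      exact hq (eq_zero_of_Ioo_aux _ hcon)
    obtain ⟨s, hs, hs0⟩ := hex
    refine intervalIntegral.integral_pos (by norm_num) ?_ (fun x _ => mul_self_nonneg _)
      ⟨s, Set.Ioo_subset_Icc_self hs, mul_self_pos.2 hs0⟩
    exact ((derivative (recon p v)).continuous.mul (derivative (recon p v)).continuous).continuousOn
end
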